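/- Fix y in the Weyl group W and a reduced expression y = s_{i_1}⋯s_{i_l}; for 1 ≤ j ≤ l set β_j := s_{i_1}⋯s_{i_{j−1}}(α_{i_j}) (an element of Φ⁺). Then for every w ∈ W, the element Σ β_{j_1}β_{j_2}⋯β_{j_k} of Sym(V), where the sum is over all sequences 1 ≤ j_1 < j_2 < ⋯ < j_k ≤ l with k = ℓ(w) and s_{i_{j_1}} s_{i_{j_2}} ⋯ s_{i_{j_k}} = w (i.e. over reduced subwords of the chosen word representing w), does not depend on the choice of reduced expression for y (the AJS/Billey formula for the restriction of the equivariant Schubert class at the fixed point y is well defined). -/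

import Mathlib

/-
STATEMENT 1: Fix y ∈ W and a reduced expression y = s_{i_1}⋯s_{i_l}; set
β_j := s_{i_1}⋯s_{i_{j−1}}(α_{i_j}) ∈ Φ⁺.  Then for every w ∈ W the element
Σ β_{j_1}⋯β_{j_k} of Sym(V) — the sum over all 1 ≤ j_1 < ⋯ < j_k ≤ l with k = ℓ(w) and
s_{i_{j_1}}⋯s_{i_{j_k}} = w (reduced subwords representing w) — does not depend on the
choice of reduced expression for y (AJS/Billey formula).

Since this version of Mathlib has no symmetric algebra, we use the universal property of
Sym(V): an element of Sym(V) is determined by (and determines) its image under every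
ℝ-algebra map to a commutative ℝ-algebra A, i.e. under every ℝ-linear map ι : V →ₗ[ℝ] A.
The statement below is quantified over all such (A, ι), which is equivalent to the
identity in Sym(V).
-/

open scoped Classical

set_option maxHeartbeats 1000000
set_option synthInstance.maxHeartbeats 400000

noncomputable section

variable {n : ℕ} {W : Type*} [Group W] {M : CoxeterMatrix (Fin n)} (cs : CoxeterSystem M W)
variable {V : Type*} [AddCommGroup V] [Module ℝ V]

/-- For a word `ω = [i_1, …, i_l]` and a position `j` (0-indexed), the root
`β_{j+1} = s_{i_1}⋯s_{i_j}(α_{i_{j+1}})`. -/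
def betaRoot (σ : W →* (V ≃ₗ[ℝ] V)) (α : Fin n → V) (ω : List (Fin n)) (j : Fin ω.length) : V :=
  σ (cs.wordProd (ω.take j.val)) (α (ω.get j))

/-- The sum `Σ β_{j_1}⋯β_{j_k}` over all subsequences `j_1 < ⋯ < j_k` of positions of the
word `ω` such that `k = ℓ(w)` and `s_{i_{j_1}}⋯s_{i_{j_k}} = w`, i.e. over reduced subwords
of `ω` representing `w`. -/
def billeySum (σ : W →* (V ≃ₗ[ℝ] V)) (α : Fin n → V)
    (A : Type*) [CommRing A] [Algebra ℝ A] (ι : V →ₗ[ℝ] A)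
    (ω : List (Fin n)) (w : W) : A :=
  ∑ s : Finset (Fin ω.length),
    if cs.wordProd ((s.sort (· ≤ ·)).map ω.get) = w ∧ s.card = cs.length w then
      ∏ j ∈ s, ι (betaRoot cs σ α ω j)
    else 0

/-!
If `ι` kills `β_j`, then `ι ∘ s_{i_1}⋯s_{i_{j-1}}` kills `α_{i_j}` and is therefore invariant under
`s_{i_j}`, so the `j`-th letter can be deleted from the word without changing the sum. Hence
deleting the `j`-th letter never changes the sum modulo `β_j`.

Let two reduced words of `y` be given. Their roots are the same, namely the inversions `β` of `y`,
and deleting the letter with root `β` leaves words of the same element `t_β y`. By induction on the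
length, the difference of the two sums is divisible by every inversion of `y`. These are `ℓ(y)`
pairwise coprime linear forms, whereas the difference is homogeneous of degree `ℓ(w)`; so it
vanishes if `ℓ(w) < ℓ(y)`. If `ℓ(w) ≥ ℓ(y)`, the only possible subword is the whole word, and both
sums are the product of the inversions of `y` or zero.

The induction leaves the reduced words, but `s_i s_i` can be cancelled in any word without changing
the sums, which together with the induction hypothesis reduces every word to a reduced one.
-/

section Reflection

variable {R N : Type*} [CommRing R] [AddCommGroup N] [Module R N]

/-- The automorphism `g` is a reflection which negates `x` and moves every vector by a multiple
of `x`; the coroot of `x` is the functional `f`, and is not recorded. -/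
def IsReflectionAlong (g : N ≃ₗ[R] N) (x : N) : Prop :=
  ∃ f : Module.Dual R N, f x = 2 ∧ ∀ z, g z = z - f z • x

namespace IsReflectionAlong

variable {g g' : N ≃ₗ[R] N} {x : N}

theorem apply_self (hg : IsReflectionAlong g x) : g x = -x := by
  obtain ⟨f, hfx, hf⟩ := hg
  rw [hf, hfx, two_smul, sub_add_cancel_left]

theorem ne_zero [NeZero (2 : R)] (hg : IsReflectionAlong g x) : x ≠ 0 := by
  rintro rfl
  obtain ⟨f, hf0, -⟩ := hg
  exact two_ne_zero (hf0.symm.trans (map_zero f))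

theorem of_smul {c : R} (hg : IsReflectionAlong g (c • x)) : IsReflectionAlong g x := by
  obtain ⟨f, hfx, hf⟩ := hg
  refine ⟨c • f, by rw [← hfx, map_smul, LinearMap.smul_apply], fun z => ?_⟩
  rw [hf, LinearMap.smul_apply, smul_smul, smul_eq_mul, mul_comm]

theorem conj (hg : IsReflectionAlong g x) (u : N ≃ₗ[R] N) :
    IsReflectionAlong (u * g * u⁻¹) (u x) := by
  obtain ⟨f, hfx, hf⟩ := hg
  refine ⟨f ∘ₗ (u.symm : N →ₗ[R] N), by simp [hfx], fun z => ?_⟩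
  change u (g (u.symm z)) = _
  simp [hf]

theorem eq_of_mapsTo [CharZero R] [IsDomain R] [Module.IsTorsionFree R N]
    (hg : IsReflectionAlong g x) (hg' : IsReflectionAlong g' x) {Φ : Set N} (hfin : Φ.Finite)
    (hspan : Submodule.span R Φ = ⊤) (hΦ : Set.MapsTo g Φ Φ) (hΦ' : Set.MapsTo g' Φ Φ) :
    g = g' := by
  obtain ⟨f, hfx, hf⟩ := hg
  obtain ⟨f', hfx', hf'⟩ := hg'
  have hff' : f = f' := Module.Dual.eq_of_preReflection_mapsTo hfin hspan
    hfx (fun z hz => by simpa [Module.preReflection_apply, hf] using hΦ hz)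
    hfx' (fun z hz => by simpa [Module.preReflection_apply, hf'] using hΦ' hz)
  ext z
  rw [hf, hf', hff']

end IsReflectionAlong

end Reflection

section LinearForm

open MvPolynomial

section CommRing

variable {R N κ : Type*} [CommRing R] [AddCommGroup N] [Module R N] (b : Module.Basis κ R N)

/-- The canonical map of a module with basis `b` into its symmetric algebra, realised as the
polynomial ring in the basis vectors. -/
def linearForm : N →ₗ[R] MvPolynomial κ R := b.constr R X

theorem isSymmetricAlgebra_linearForm : IsSymmetricAlgebra (linearForm b) :=
  SymmetricAlgebra.IsSymmetricAlgebra.mvPolynomial κ b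

theorem linearForm_eq_sumSMulX (v : N) : linearForm b v = sumSMulX (b.repr v) := by
  rw [linearForm, Module.Basis.constr_apply, sumSMulX, Finsupp.linearCombination_apply]

theorem linearForm_injective : Function.Injective (linearForm b) := fun v v' h => by
  apply b.repr.injective
  ext k
  rw [← coeff_sumSMulX, ← coeff_sumSMulX, ← linearForm_eq_sumSMulX, ← linearForm_eq_sumSMulX, h]

theorem isHomogeneous_linearForm (v : N) : (linearForm b v).IsHomogeneous 1 := by
  rw [linearForm, Module.Basis.constr_apply]
  refine IsHomogeneous.sum _ _ _ fun k _ => ?_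
  simpa only [smul_eq_C_mul] using isHomogeneous_C_mul_X _ k

end CommRing

variable {K E κ : Type*} [Field K] [AddCommGroup E] [Module K E] (b : Module.Basis κ K E)

theorem irreducible_linearForm {v : E} (hv : v ≠ 0) : Irreducible (linearForm b v) := by
  have hne : b.repr v ≠ 0 := fun h => hv (by simpa using h)
  obtain ⟨k, hk⟩ := Finsupp.ne_iff.1 hne
  rw [linearForm_eq_sumSMulX]
  refine irreducible_sumSMulX _ (Finsupp.support_nonempty_iff.2 hne) fun r hr => ?_
  exact isUnit_iff_ne_zero.2 fun hr0 => hk (zero_dvd_iff.1 (hr0 ▸ hr k))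

theorem isRelPrime_linearForm {v v' : E} (hv : v ≠ 0) (hv' : v' ≠ 0) (h : ∀ c : K, v' ≠ c • v) :
    IsRelPrime (linearForm b v) (linearForm b v') := by
  refine (irreducible_linearForm b hv).isRelPrime_iff_not_dvd.2 fun hdvd => ?_
  obtain ⟨x, hx⟩ := ((irreducible_linearForm b hv).dvd_irreducible_iff_associated
    (irreducible_linearForm b hv')).1 hdvd
  obtain ⟨c, -, hc⟩ := isUnit_iff_eq_C_of_isReduced.1 x.isUnit
  refine h c (linearForm_injective b ?_)
  rw [← hx, hc, map_smul, smul_eq_C_mul, mul_comm]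

theorem eq_zero_of_linearForm_dvd {J : Type*} [Fintype J] {v : J → E} (hv : ∀ j, v j ≠ 0)
    (hvv : ∀ j k, j ≠ k → ∀ c : K, v k ≠ c • v j) {p : MvPolynomial κ K} {d : ℕ}
    (hp : p.IsHomogeneous d) (hd : d < Fintype.card J) (hdvd : ∀ j, linearForm b (v j) ∣ p) :
    p = 0 := by
  by_contra hp0
  have hprod : ∏ j, linearForm b (v j) ∣ p := Fintype.prod_dvd_of_isRelPrime
    (fun j k hjk => isRelPrime_linearForm b (hv j) (hv k) (hvv j k hjk)) hdvd
  have hhom : (∏ j, linearForm b (v j)).IsHomogeneous (∑ _j : J, 1) :=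
    IsHomogeneous.prod _ _ _ fun j _ => isHomogeneous_linearForm b (v j)
  have hdeg := totalDegree_le_of_dvd_of_isDomain hprod hp0
  rw [hhom.totalDegree (ne_zero_of_dvd_ne_zero hp0 hprod), hp.totalDegree hp0] at hdeg
  simp only [Finset.sum_const, Finset.card_univ, smul_eq_mul, mul_one] at hdeg
  omega

end LinearForm

section Subword

variable {B : Type*}

/-- The subword of `ω` formed by the letters at the positions in `s`. -/
def subword (ω : List B) (s : Finset (Fin ω.length)) : List B := (s.sort (· ≤ ·)).map ω.get

theorem length_subword (ω : List B) (s : Finset (Fin ω.length)) :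
    (subword ω s).length = s.card := by
  simp [subword]

theorem subword_univ (ω : List B) : subword ω Finset.univ = ω := by
  simp [subword, Fin.sort_univ, ← List.ofFn_eq_map]

theorem subword_cons_map_succ (i : B) (ω : List B) (s : Finset (Fin ω.length)) :
    subword (i :: ω) (s.map (Fin.succEmb _)) = subword ω s := by
  change ((s.map (Fin.succEmb ω.length)).sort (· ≤ ·)).map (i :: ω).get = _
  rw [← (Fin.strictMono_succ.strictMonoOn _).map_finsetSort (f := Fin.succEmb _), List.map_map]
  rfl

theorem subword_cons_insert_zero (i : B) (ω : List B) (s : Finset (Fin ω.length)) :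
    subword (i :: ω) (insert (0 : Fin (ω.length + 1)) (s.map (Fin.succEmb _))) =
      i :: subword ω s := by
  rw [← subword_cons_map_succ i ω s]
  exact congrArg (List.map (i :: ω).get) (Finset.sort_insert (s := s.map (Fin.succEmb _)) _
    (fun _ _ => Fin.zero_le _) (by simp))

theorem sum_finset_fin_succ {A : Type*} [AddCommMonoid A] {l : ℕ} (F : Finset (Fin (l + 1)) → A) :
    ∑ s, F s = ∑ s : Finset (Fin l), F (s.map (Fin.succEmb l)) +
      ∑ s : Finset (Fin l), F (insert 0 (s.map (Fin.succEmb l))) := by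
  have hinj : Function.Injective (Finset.image (Fin.succ : Fin l → Fin (l + 1))) :=
    Finset.image_injective (Fin.succ_injective l)
  rw [← Finset.powerset_univ, Fin.univ_succ, Finset.cons_eq_insert, Finset.map_eq_image,
    Finset.sum_powerset_insert (by simp), Function.Embedding.coeFn_mk, Finset.powerset_image,
    Finset.sum_image hinj.injOn, Finset.sum_image hinj.injOn, Finset.powerset_univ]
  simp only [Finset.map_eq_image, Fin.coe_succEmb]

theorem wordProd_cons_eq_and_length_eq_iff {G : Type*} [Group G] {M : CoxeterMatrix B}
    (cs : CoxeterSystem M G) (i : B) (τ : List B) (w : G) :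
    cs.wordProd (i :: τ) = w ∧ τ.length + 1 = cs.length w ↔
      cs.IsLeftDescent w i ∧
        cs.wordProd τ = cs.simple i * w ∧ τ.length = cs.length (cs.simple i * w) := by
  have hle := cs.length_wordProd_le τ
  rw [cs.wordProd_cons, cs.isLeftDescent_iff]
  constructor
  · rintro ⟨rfl, hlen⟩
    have hmul := cs.length_simple_mul (cs.wordProd τ) i
    rw [cs.simple_mul_simple_cancel_left]
    exact ⟨by omega, rfl, by omega⟩
  · rintro ⟨hdesc, hτ, hlen⟩
    exact ⟨by rw [hτ, cs.simple_mul_simple_cancel_left], by omega⟩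

end Subword

section BilleySum

variable (σ : W →* (V ≃ₗ[ℝ] V)) (α : Fin n → V)

theorem betaRoot_cons_zero (i : Fin n) (ω : List (Fin n)) :
    betaRoot cs σ α (i :: ω) (0 : Fin (ω.length + 1)) = α i := by
  simp [betaRoot]

theorem betaRoot_cons_succ (i : Fin n) (ω : List (Fin n)) (j : Fin ω.length) :
    betaRoot cs σ α (i :: ω) j.succ = σ (cs.simple i) (betaRoot cs σ α ω j) := by
  simp [betaRoot, cs.wordProd_cons]

variable {A : Type*} [CommRing A] [Algebra ℝ A] (ι : V →ₗ[ℝ] A)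

theorem billeySum_eq_sum_subword (ω : List (Fin n)) (w : W) :
    billeySum cs σ α A ι ω w =
      ∑ s, if cs.wordProd (subword ω s) = w ∧ (subword ω s).length = cs.length w then
        ∏ j ∈ s, ι (betaRoot cs σ α ω j) else 0 := by
  simp only [length_subword]
  rfl

theorem map_billeySum {A' : Type*} [CommRing A'] [Algebra ℝ A'] (φ : A →ₐ[ℝ] A')
    (ω : List (Fin n)) (w : W) :
    φ (billeySum cs σ α A ι ω w) = billeySum cs σ α A' (φ.toLinearMap ∘ₗ ι) ω w := by
  simp [billeySum, apply_ite φ]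

theorem prod_betaRoot_cons_map_succ (i : Fin n) (ω : List (Fin n)) (s : Finset (Fin ω.length)) :
    ∏ j ∈ s.map (Fin.succEmb _), ι (betaRoot cs σ α (i :: ω) j) =
      ∏ j ∈ s, (ι ∘ₗ (σ (cs.simple i) : V →ₗ[ℝ] V)) (betaRoot cs σ α ω j) := by
  rw [Finset.prod_map]
  exact Finset.prod_congr rfl fun j _ => congrArg ι (betaRoot_cons_succ cs σ α i ω j)

theorem prod_betaRoot_cons_insert_zero (i : Fin n) (ω : List (Fin n))
    (s : Finset (Fin ω.length)) :
    ∏ j ∈ insert (0 : Fin (ω.length + 1)) (s.map (Fin.succEmb _)),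
        ι (betaRoot cs σ α (i :: ω) j) =
      ι (α i) * ∏ j ∈ s, (ι ∘ₗ (σ (cs.simple i) : V →ₗ[ℝ] V)) (betaRoot cs σ α ω j) := by
  rw [Finset.prod_insert (by simp), prod_betaRoot_cons_map_succ, betaRoot_cons_zero]

theorem billeySum_cons (i : Fin n) (ω : List (Fin n)) (w : W) :
    billeySum cs σ α A ι (i :: ω) w =
      billeySum cs σ α A (ι ∘ₗ (σ (cs.simple i) : V →ₗ[ℝ] V)) ω w +
        if cs.IsLeftDescent w i then
          ι (α i) * billeySum cs σ α A (ι ∘ₗ (σ (cs.simple i) : V →ₗ[ℝ] V)) ω (cs.simple i * w)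
        else 0 := by
  simp only [billeySum_eq_sum_subword]
  refine (sum_finset_fin_succ (l := ω.length) _).trans (congrArg₂ _ ?_ ?_)
  · refine Finset.sum_congr rfl fun s _ =>
      if_congr ?_ (prod_betaRoot_cons_map_succ cs σ α ι i ω s) rfl
    rw [subword_cons_map_succ]
  · refine (Finset.sum_congr rfl fun s _ =>
      if_congr (Q := cs.IsLeftDescent w i ∧ cs.wordProd (subword ω s) = cs.simple i * w ∧
          (subword ω s).length = cs.length (cs.simple i * w)) ?_
        (prod_betaRoot_cons_insert_zero cs σ α ι i ω s) rfl).trans ?_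
    · rw [subword_cons_insert_zero, List.length_cons, wordProd_cons_eq_and_length_eq_iff]
    · by_cases hw : cs.IsLeftDescent w i <;> simp [hw, Finset.mul_sum]

theorem billeySum_of_length_le {ω : List (Fin n)} {w : W} (hw : ω.length ≤ cs.length w) :
    billeySum cs σ α A ι ω w =
      if cs.wordProd ω = w then ∏ j, ι (betaRoot cs σ α ω j) else 0 := by
  rw [billeySum_eq_sum_subword, Finset.sum_eq_single Finset.univ]
  · rw [subword_univ]
    refine if_congr (and_iff_left_of_imp ?_) rfl rfl
    rintro rfl
    exact hw.antisymm (cs.length_wordProd_le ω)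
  · refine fun s _ hs => if_neg fun h => ?_
    have hcard := Finset.card_lt_card (Finset.ssubset_univ_iff.2 hs)
    rw [Finset.card_univ, Fintype.card_fin, ← length_subword] at hcard
    omega
  · simp

theorem isHomogeneous_billeySum_linearForm {κ : Type*} (b : Module.Basis κ ℝ V)
    (ω : List (Fin n)) (w : W) :
    (billeySum cs σ α (MvPolynomial κ ℝ) (linearForm b) ω w).IsHomogeneous (cs.length w) := by
  refine MvPolynomial.IsHomogeneous.sum _ _ _ fun s _ => ?_
  split_ifs with hs
  · simpa [← hs.2] using MvPolynomial.IsHomogeneous.prod s _ _ fun j _ =>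
      isHomogeneous_linearForm b (betaRoot cs σ α ω j)
  · exact MvPolynomial.isHomogeneous_zero _ _ _

theorem billeySum_eq_of_isSymmetricAlgebra {S : Type*} [CommRing S] [Algebra ℝ S] {f : V →ₗ[ℝ] S}
    (hf : IsSymmetricAlgebra f) {ω ω' : List (Fin n)} {w : W}
    (hS : billeySum cs σ α S f ω w = billeySum cs σ α S f ω' w) :
    billeySum cs σ α A ι ω w = billeySum cs σ α A ι ω' w := by
  rw [← hf.lift_comp_linearMap ι]
  exact (map_billeySum ..).symm.trans ((congrArg _ hS).trans (map_billeySum ..))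

/-- Two words are Billey equivalent if all their Billey sums coincide in `Sym(V)`. -/
def BilleyEquiv (ω ω' : List (Fin n)) : Prop :=
  ∀ w, billeySum cs σ α _ (SymmetricAlgebra.ι ℝ V) ω w =
    billeySum cs σ α _ (SymmetricAlgebra.ι ℝ V) ω' w

namespace BilleyEquiv

variable {cs σ α} {ω ω' τ : List (Fin n)}

theorem symm (h : BilleyEquiv cs σ α ω ω') : BilleyEquiv cs σ α ω' ω := fun w => (h w).symm

theorem trans (h : BilleyEquiv cs σ α ω ω') (h' : BilleyEquiv cs σ α ω' τ) :
    BilleyEquiv cs σ α ω τ := fun w => (h w).trans (h' w)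

theorem billeySum_eq (h : BilleyEquiv cs σ α ω ω') (w : W) :
    billeySum cs σ α A ι ω w = billeySum cs σ α A ι ω' w :=
  billeySum_eq_of_isSymmetricAlgebra cs σ α ι SymmetricAlgebra.isSymmetricAlgebra_ι (h w)

theorem cons (h : BilleyEquiv cs σ α ω ω') (i : Fin n) :
    BilleyEquiv cs σ α (i :: ω) (i :: ω') := fun w => by
  simp only [billeySum_cons, h.billeySum_eq]

end BilleyEquiv

end BilleySum

/-- A positive system for the action `σ` of `W` on `V`: a finite spanning set `Φp` disjoint from
its negative, containing the simple roots `α`, whose elements other than `α i` are permuted by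
`s_i`. The functionals `αv` are the simple coroots. -/
structure IsPositiveSystem (σ : W →* (V ≃ₗ[ℝ] V)) (Φp : Finset V) (α : Fin n → V)
    (αv : Fin n → (V →ₗ[ℝ] ℝ)) : Prop where
  faithful : Function.Injective σ
  simple_mem : ∀ i, α i ∈ Φp
  span_eq_top : Submodule.span ℝ (Φp : Set V) = ⊤
  simple_apply : ∀ (i : Fin n) (v : V), σ (cs.simple i) v = v - αv i v • α i
  pairing_self : ∀ i, αv i (α i) = 2
  simple_apply_mem : ∀ i, ∀ b ∈ Φp, b ≠ α i → σ (cs.simple i) b ∈ Φp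
  neg_notMem : ∀ b ∈ Φp, -b ∉ Φp

namespace IsPositiveSystem

variable {cs} {σ : W →* (V ≃ₗ[ℝ] V)} {Φp : Finset V} {α : Fin n → V} {αv : Fin n → (V →ₗ[ℝ] ℝ)}

theorem isReflectionAlong_simple (h : IsPositiveSystem cs σ Φp α αv) (i : Fin n) :
    IsReflectionAlong (σ (cs.simple i)) (α i) :=
  ⟨αv i, h.pairing_self i, h.simple_apply i⟩

theorem isReflectionAlong_betaRoot (h : IsPositiveSystem cs σ Φp α αv) (ω : List (Fin n))
    (j : Fin ω.length) :
    IsReflectionAlong (σ ((cs.leftInvSeq ω).getD j 1)) (betaRoot cs σ α ω j) := by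
  rw [cs.getD_leftInvSeq, List.getElem?_eq_getElem j.isLt, Option.map_some, Option.getD_some,
    map_mul, map_mul, map_inv]
  exact (h.isReflectionAlong_simple _).conj _

theorem mapsTo_union_neg (h : IsPositiveSystem cs σ Φp α αv) (w : W) :
    Set.MapsTo (σ w) (Φp ∪ -Φp : Set V) (Φp ∪ -Φp) := by
  have mapsTo_simple (i : Fin n) {b : V} (hb : b ∈ Φp) :
      σ (cs.simple i) b ∈ (Φp ∪ -Φp : Set V) := by
    by_cases hbi : b = α i
    · right
      simpa [hbi, (h.isReflectionAlong_simple i).apply_self] using h.simple_mem i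
    · exact Or.inl (h.simple_apply_mem i b hb hbi)
  induction w using cs.simple_induction_left with
  | one => rw [map_one]; exact Set.mapsTo_id _
  | mul_simple_left w i ih =>
    intro b hb
    rw [map_mul, LinearEquiv.mul_apply]
    rcases ih hb with hc | hc
    · exact mapsTo_simple i hc
    · simpa [or_comm] using mapsTo_simple i hc

theorem eq_of_isReflectionAlong (h : IsPositiveSystem cs σ Φp α αv) {u v : W} {x : V}
    (hu : IsReflectionAlong (σ u) x) (hv : IsReflectionAlong (σ v) x) : u = v :=
  h.faithful <| hu.eq_of_mapsTo hv (Φp.finite_toSet.union Φp.finite_toSet.neg)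
    (top_unique <| h.span_eq_top ▸ Submodule.span_mono Set.subset_union_left)
    (h.mapsTo_union_neg u) (h.mapsTo_union_neg v)

theorem apply_inv_simple_mul_simple (h : IsPositiveSystem cs σ Φp α αv) (i : Fin n) (y : W) :
    σ (cs.simple i * y)⁻¹ (α i) = -σ y⁻¹ (α i) := by
  rw [mul_inv_rev, cs.inv_simple, map_mul, LinearEquiv.mul_apply,
    (h.isReflectionAlong_simple i).apply_self, map_neg]

theorem exists_betaRoot_eq (h : IsPositiveSystem cs σ Φp α αv) (ω : List (Fin n)) {b : V}
    (hb : b ∈ Φp) (hωb : σ (cs.wordProd ω)⁻¹ b ∉ Φp) : ∃ j, betaRoot cs σ α ω j = b := by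
  induction ω generalizing b with
  | nil => exact absurd hb (by simpa using hωb)
  | cons i τ ih =>
    by_cases hbi : b = α i
    · exact ⟨(0 : Fin (τ.length + 1)), by rw [betaRoot_cons_zero, hbi]⟩
    rw [cs.wordProd_cons, mul_inv_rev, cs.inv_simple, map_mul, LinearEquiv.mul_apply] at hωb
    obtain ⟨j, hj⟩ := ih (h.simple_apply_mem i b hb hbi) hωb
    refine ⟨j.succ, ?_⟩
    rw [betaRoot_cons_succ, hj, ← LinearEquiv.mul_apply, ← map_mul, cs.simple_mul_simple_self,
      map_one, LinearEquiv.coe_one, id]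

/-- If `y⁻¹` made `α_i` negative, then `α_i` would be a root of the word `τ`, so that `s_i τ` could
be shortened by deleting a letter of `τ`. -/
theorem apply_simple_mem_of_isReduced_cons (h : IsPositiveSystem cs σ Φp α αv) {i : Fin n}
    {τ : List (Fin n)} (hred : cs.IsReduced (i :: τ)) : σ (cs.wordProd τ)⁻¹ (α i) ∈ Φp := by
  by_contra hneg
  obtain ⟨j, hj⟩ := h.exists_betaRoot_eq τ (h.simple_mem i) hneg
  have hrefl : (cs.leftInvSeq τ).getD j 1 = cs.simple i :=
    h.eq_of_isReflectionAlong (h.isReflectionAlong_betaRoot τ j)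
      (hj ▸ h.isReflectionAlong_simple i)
  have hlen : cs.length (cs.wordProd (i :: τ)) ≤ (τ.eraseIdx j).length := by
    rw [cs.wordProd_cons, ← hrefl, cs.getD_leftInvSeq_mul_wordProd]
    exact cs.length_wordProd_le _
  rw [hred.eq, List.length_cons, List.length_eraseIdx_of_lt j.isLt] at hlen
  omega

theorem betaRoot_mem_inversions (h : IsPositiveSystem cs σ Φp α αv) {ω : List (Fin n)}
    (hred : cs.IsReduced ω) (j : Fin ω.length) :
    betaRoot cs σ α ω j ∈ Φp ∧ σ (cs.wordProd ω)⁻¹ (betaRoot cs σ α ω j) ∉ Φp := by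
  induction ω with
  | nil => exact j.elim0
  | cons i τ ih =>
    have hi : σ (cs.wordProd τ)⁻¹ (α i) ∈ Φp := h.apply_simple_mem_of_isReduced_cons hred
    rw [cs.wordProd_cons]
    refine Fin.cases ?_ (fun k => ?_) j
    · rw [betaRoot_cons_zero, h.apply_inv_simple_mul_simple]
      exact ⟨h.simple_mem i, h.neg_notMem _ hi⟩
    · obtain ⟨hmem, hneg⟩ := ih (by simpa using hred.drop 1) k
      rw [betaRoot_cons_succ, ← LinearEquiv.mul_apply, ← map_mul, mul_inv_rev,
        inv_mul_cancel_right]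
      exact ⟨h.simple_apply_mem i _ hmem fun hk => hneg (hk ▸ hi), hneg⟩

theorem image_betaRoot (h : IsPositiveSystem cs σ Φp α αv) {ω : List (Fin n)}
    (hred : cs.IsReduced ω) :
    Finset.univ.image (betaRoot cs σ α ω) = {b ∈ Φp | σ (cs.wordProd ω)⁻¹ b ∉ Φp} := by
  ext b
  rw [Finset.mem_image, Finset.mem_filter]
  constructor
  · rintro ⟨j, -, rfl⟩
    exact h.betaRoot_mem_inversions hred j
  · rintro ⟨hb, hneg⟩
    obtain ⟨j, hj⟩ := h.exists_betaRoot_eq ω hb hneg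
    exact ⟨j, Finset.mem_univ j, hj⟩

theorem betaRoot_ne_smul (h : IsPositiveSystem cs σ Φp α αv) {ω : List (Fin n)}
    (hred : cs.IsReduced ω) {j k : Fin ω.length} (hjk : j ≠ k) (c : ℝ) :
    betaRoot cs σ α ω k ≠ c • betaRoot cs σ α ω j := by
  intro hc
  have hrefl : (cs.leftInvSeq ω).getD k 1 = (cs.leftInvSeq ω).getD j 1 :=
    h.eq_of_isReflectionAlong (hc ▸ h.isReflectionAlong_betaRoot ω k).of_smul
      (h.isReflectionAlong_betaRoot ω j)
  rw [List.getD_eq_getElem _ _ (by simp), List.getD_eq_getElem _ _ (by simp),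
    hred.nodup_leftInvSeq.getElem_inj_iff] at hrefl
  exact hjk (Fin.ext hrefl.symm)

theorem betaRoot_injective (h : IsPositiveSystem cs σ Φp α αv) {ω : List (Fin n)}
    (hred : cs.IsReduced ω) : Function.Injective (betaRoot cs σ α ω) := fun j k hjk => by
  by_contra hne
  exact h.betaRoot_ne_smul hred hne 1 (by rw [one_smul, hjk])

theorem prod_betaRoot_eq {P : Type*} [CommMonoid P] (h : IsPositiveSystem cs σ Φp α αv) (f : V → P)
    {ω ω' : List (Fin n)} (hω : cs.IsReduced ω) (hω' : cs.IsReduced ω')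
    (hprod : cs.wordProd ω = cs.wordProd ω') :
    ∏ j, f (betaRoot cs σ α ω j) = ∏ j, f (betaRoot cs σ α ω' j) := by
  rw [← Finset.prod_image (h.betaRoot_injective hω).injOn, h.image_betaRoot hω, hprod,
    ← h.image_betaRoot hω', Finset.prod_image (h.betaRoot_injective hω').injOn]

theorem exists_wordProd_eraseIdx_eq (h : IsPositiveSystem cs σ Φp α αv) {ω ω' : List (Fin n)}
    (hω : cs.IsReduced ω) (hprod : cs.wordProd ω = cs.wordProd ω') (j : Fin ω.length) :
    ∃ k : Fin ω'.length, betaRoot cs σ α ω' k = betaRoot cs σ α ω j ∧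
      cs.wordProd (ω'.eraseIdx k) = cs.wordProd (ω.eraseIdx j) := by
  obtain ⟨hmem, hneg⟩ := h.betaRoot_mem_inversions hω j
  obtain ⟨k, hk⟩ := h.exists_betaRoot_eq ω' hmem (hprod ▸ hneg)
  refine ⟨k, hk, ?_⟩
  rw [← cs.getD_leftInvSeq_mul_wordProd, ← cs.getD_leftInvSeq_mul_wordProd, hprod]
  congr 1
  exact h.eq_of_isReflectionAlong (hk ▸ h.isReflectionAlong_betaRoot ω' k)
    (h.isReflectionAlong_betaRoot ω j)

theorem billeyEquiv_cons_cons (h : IsPositiveSystem cs σ Φp α αv) (i : Fin n) (ω : List (Fin n)) :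
    BilleyEquiv cs σ α (i :: i :: ω) ω := fun w => by
  have hcomp (ι : V →ₗ[ℝ] SymmetricAlgebra ℝ V) :
      (ι ∘ₗ (σ (cs.simple i) : V →ₗ[ℝ] V)) ∘ₗ (σ (cs.simple i) : V →ₗ[ℝ] V) = ι := by
    ext v
    simp [← LinearEquiv.mul_apply, ← map_mul]
  have hdesc := cs.isLeftDescent_iff_not_isLeftDescent_mul (w := w) (i := i)
  simp only [billeySum_cons, hcomp]
  by_cases hw : cs.IsLeftDescent w i
  · simp [hw, hdesc.1 hw, (h.isReflectionAlong_simple i).apply_self]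
  · simp [hw]

variable {A : Type*} [CommRing A] [Algebra ℝ A]

theorem billeySum_eraseIdx_of_betaRoot_eq_zero (h : IsPositiveSystem cs σ Φp α αv) (ι : V →ₗ[ℝ] A)
    {ω : List (Fin n)} {j : Fin ω.length} (hj : ι (betaRoot cs σ α ω j) = 0) (w : W) :
    billeySum cs σ α A ι ω w = billeySum cs σ α A ι (ω.eraseIdx j) w := by
  induction ω generalizing ι w with
  | nil => exact j.elim0
  | cons i τ ih =>
    revert hj
    refine Fin.cases (fun hj => ?_) (fun k hk => ?_) j
    · rw [betaRoot_cons_zero] at hj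
      have hι : ι ∘ₗ (σ (cs.simple i) : V →ₗ[ℝ] V) = ι := by
        ext v
        simp [h.simple_apply, hj]
      simp [billeySum_cons, hι, hj]
    · rw [betaRoot_cons_succ] at hk
      simp [billeySum_cons, ih (ι ∘ₗ (σ (cs.simple i) : V →ₗ[ℝ] V)) hk]

theorem dvd_billeySum_sub_billeySum_eraseIdx (h : IsPositiveSystem cs σ Φp α αv) (ι : V →ₗ[ℝ] A)
    (ω : List (Fin n)) (j : Fin ω.length) (w : W) :
    ι (betaRoot cs σ α ω j) ∣
      billeySum cs σ α A ι ω w - billeySum cs σ α A ι (ω.eraseIdx j) w := by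
  let I : Ideal A := Ideal.span {ι (betaRoot cs σ α ω j)}
  have hzero : ((Ideal.Quotient.mkₐ ℝ I).toLinearMap ∘ₗ ι) (betaRoot cs σ α ω j) = 0 :=
    Ideal.Quotient.eq_zero_iff_mem.2 (Ideal.mem_span_singleton_self _)
  rw [← Ideal.mem_span_singleton, ← Ideal.Quotient.eq, ← Ideal.Quotient.mkₐ_eq_mk ℝ,
    map_billeySum, map_billeySum]
  exact h.billeySum_eraseIdx_of_betaRoot_eq_zero _ hzero w

theorem billeyEquiv_of_isReduced (h : IsPositiveSystem cs σ Φp α αv) {ω ω' : List (Fin n)}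
    (hω : cs.IsReduced ω) (hω' : cs.IsReduced ω') (hprod : cs.wordProd ω = cs.wordProd ω')
    (herase : ∀ (j : Fin ω.length) (k : Fin ω'.length),
      cs.wordProd (ω.eraseIdx j) = cs.wordProd (ω'.eraseIdx k) →
        BilleyEquiv cs σ α (ω.eraseIdx j) (ω'.eraseIdx k)) :
    BilleyEquiv cs σ α ω ω' := fun w => by
  let b := Module.Basis.ofVectorSpace ℝ V
  have hlen : ω.length = ω'.length := by rw [← hω.eq, hprod, hω'.eq]
  apply billeySum_eq_of_isSymmetricAlgebra cs σ α _ (isSymmetricAlgebra_linearForm b)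
  rcases lt_or_ge (cs.length w) ω.length with hlt | hge
  · refine sub_eq_zero.1 <| eq_zero_of_linearForm_dvd b
      (fun j => (h.isReflectionAlong_betaRoot ω j).ne_zero)
      (fun j k hjk => h.betaRoot_ne_smul hω hjk)
      ((isHomogeneous_billeySum_linearForm cs σ α b ω w).sub
        (isHomogeneous_billeySum_linearForm cs σ α b ω' w))
      (by rwa [Fintype.card_fin]) fun j => ?_
    obtain ⟨k, hk, hjk⟩ := h.exists_wordProd_eraseIdx_eq hω hprod j
    have hdvd := h.dvd_billeySum_sub_billeySum_eraseIdx (linearForm b) ω j w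
    have hdvd' := h.dvd_billeySum_sub_billeySum_eraseIdx (linearForm b) ω' k w
    rw [hk, ← (herase j k hjk.symm).billeySum_eq] at hdvd'
    simpa using dvd_sub hdvd hdvd'
  · rw [billeySum_of_length_le cs σ α _ hge, billeySum_of_length_le cs σ α _ (hlen ▸ hge), hprod,
      h.prod_betaRoot_eq _ hω hω' hprod]

theorem exists_isReduced_billeyEquiv (h : IsPositiveSystem cs σ Φp α αv) (ω : List (Fin n))
    (hshorter : ∀ τ τ' : List (Fin n), τ.length < ω.length → τ'.length < ω.length →
      cs.wordProd τ = cs.wordProd τ' → BilleyEquiv cs σ α τ τ') :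
    ∃ ρ, cs.IsReduced ρ ∧ cs.wordProd ρ = cs.wordProd ω ∧ BilleyEquiv cs σ α ω ρ := by
  cases ω with
  | nil => exact ⟨[], by simp [CoxeterSystem.IsReduced], rfl, fun _ => rfl⟩
  | cons i τ =>
    simp only [List.length_cons, Nat.lt_succ_iff] at hshorter
    obtain ⟨ρ, hρ, hτρ⟩ := cs.exists_isReduced (cs.wordProd τ)
    obtain ⟨ρ', hρ', hτρ'⟩ := cs.exists_isReduced (cs.wordProd (i :: τ))
    have hlenρ : ρ.length ≤ τ.length := by rw [← hρ.eq, ← hτρ]; exact cs.length_wordProd_le τ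
    have hτ : BilleyEquiv cs σ α τ ρ := hshorter τ ρ le_rfl hlenρ hτρ
    have hprod : cs.wordProd (i :: ρ) = cs.wordProd (i :: τ) := by
      rw [cs.wordProd_cons, cs.wordProd_cons, hτρ]
    by_cases hdesc : cs.IsLeftDescent (cs.wordProd τ) i
    · have hlenρ' : ρ'.length + 1 ≤ τ.length := by
        rw [← hρ'.eq, ← hτρ', cs.wordProd_cons, cs.isLeftDescent_iff.1 hdesc]
        exact cs.length_wordProd_le τ
      have hτ' : BilleyEquiv cs σ α τ (i :: ρ') := hshorter τ (i :: ρ') le_rfl hlenρ' (by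
        rw [cs.wordProd_cons, ← hτρ', cs.wordProd_cons, cs.simple_mul_simple_cancel_left])
      exact ⟨ρ', hρ', hτρ'.symm, (hτ'.cons i).trans (h.billeyEquiv_cons_cons i ρ')⟩
    · refine ⟨i :: ρ, ?_, hprod, hτ.cons i⟩
      rw [CoxeterSystem.IsReduced, hprod, cs.wordProd_cons, cs.not_isLeftDescent_iff.1 hdesc, hτρ,
        hρ.eq, List.length_cons]

theorem billeyEquiv_of_wordProd_eq (h : IsPositiveSystem cs σ Φp α αv) {ω ω' : List (Fin n)}
    (hprod : cs.wordProd ω = cs.wordProd ω') : BilleyEquiv cs σ α ω ω' := by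
  suffices H : ∀ N, ∀ ω ω' : List (Fin n), ω.length < N → ω'.length < N →
      cs.wordProd ω = cs.wordProd ω' → BilleyEquiv cs σ α ω ω' from
    H (max ω.length ω'.length + 1) ω ω' (by omega) (by omega) hprod
  intro N
  induction N with
  | zero => exact fun _ _ hlen => absurd hlen (Nat.not_lt_zero _)
  | succ N ih =>
    intro ω ω' hlen hlen' hprod
    obtain ⟨ρ, hρ, hωρ, hequiv⟩ := h.exists_isReduced_billeyEquiv ω
      fun τ τ' hτ hτ' => ih τ τ' (by omega) (by omega)
    obtain ⟨ρ', hρ', hωρ', hequiv'⟩ := h.exists_isReduced_billeyEquiv ω'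
      fun τ τ' hτ hτ' => ih τ τ' (by omega) (by omega)
    have hlenρ : ρ.length ≤ ω.length := by rw [← hρ.eq, hωρ]; exact cs.length_wordProd_le ω
    have hlenρ' : ρ'.length ≤ ω'.length := by rw [← hρ'.eq, hωρ']; exact cs.length_wordProd_le ω'
    have hreduced : BilleyEquiv cs σ α ρ ρ' :=
      h.billeyEquiv_of_isReduced hρ hρ' (by rw [hωρ, hprod, hωρ']) fun j k => by
        have hj := List.length_eraseIdx_add_one j.isLt
        have hk := List.length_eraseIdx_add_one k.isLt
        exact ih _ _ (by omega) (by omega)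
    exact hequiv.trans (hreduced.trans hequiv'.symm)

end IsPositiveSystem

theorem billeySum_independent_of_reduced_word_general {σ : W →* (V ≃ₗ[ℝ] V)} {Φp : Finset V}
    {α : Fin n → V} {αv : Fin n → (V →ₗ[ℝ] ℝ)} (h : IsPositiveSystem cs σ Φp α αv)
    {A : Type*} [CommRing A] [Algebra ℝ A] (ι : V →ₗ[ℝ] A) {ω ω' : List (Fin n)}
    (hprod : cs.wordProd ω = cs.wordProd ω') (w : W) :
    billeySum cs σ α A ι ω w = billeySum cs σ α A ι ω' w :=
  (h.billeyEquiv_of_wordProd_eq hprod).billeySum_eq ι w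

theorem billeySum_independent_of_reduced_word
    -- the reflection representation of W on V, faithful (W is the Weyl group of Φ)
    (σ : W →* (V ≃ₗ[ℝ] V)) (hfaith : Function.Injective σ)
    -- positive roots, simple roots, simple coroots
    (Φp : Finset V) (α : Fin n → V) (αv : Fin n → (V →ₗ[ℝ] ℝ))
    (hαmem : ∀ i, α i ∈ Φp)
    -- the roots span V
    (hspan : Submodule.span ℝ (Φp : Set V) = ⊤)
    -- reflection formula s_i(v) = v − ⟨v, α_i^∨⟩ α_i, with ⟨α_i, α_i^∨⟩ = 2
    (hrefl : ∀ (i : Fin n) (v : V), σ (cs.simple i) v = v - αv i v • α i)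
    (hpairself : ∀ i, αv i (α i) = 2)
    -- crystallographic condition
    (hcrys : ∀ i j, ∃ m : ℤ, αv i (α j) = (m : ℝ))
    -- s_i permutes the positive roots other than α_i
    (hperm : ∀ i, ∀ b ∈ Φp, b ≠ α i → σ (cs.simple i) b ∈ Φp)
    -- Φ⁺ and −Φ⁺ are disjoint, and the root system is reduced
    (hdisj : ∀ b ∈ Φp, -b ∉ Φp)
    (hreduced : ∀ b ∈ Φp, b + b ∉ Φp)
    -- the target algebra: Sym(V) via its universal property
    (A : Type*) [CommRing A] [Algebra ℝ A] (ι : V →ₗ[ℝ] A)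
    -- two reduced expressions of y
    (y : W) (ω ω' : List (Fin n))
    (hω : cs.wordProd ω = y) (hωred : ω.length = cs.length y)
    (hω' : cs.wordProd ω' = y) (hω'red : ω'.length = cs.length y)
    (w : W) :
    billeySum cs σ α A ι ω w = billeySum cs σ α A ι ω' w :=
  billeySum_independent_of_reduced_word_general cs
    ⟨hfaith, hαmem, hspan, hrefl, hpairself, hperm, hdisj⟩ ι (hω.trans hω'.symm) w
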